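/- Let n > 2, U ⊆ ℝⁿ open, and let φ : U → ℝⁿ be a smooth conformal map: there is a smooth function λ : U → (0,∞) with ⟨Dφₓ(u), Dφₓ(v)⟩ = λ²(x)⟨u,v⟩ for all x ∈ U and all u, v ∈ ℝⁿ. Then φ is biharmonic (i.e. Δ²φ^α = 0 on U for every component α) if and only if Δ(∇ln λ) − (Δ ln λ)·∇ln λ + 2∇(|∇ln λ|²) + (2−n)|∇ln λ|²·∇ln λ = 0 on U. -/

import Mathlib

/-!
Write `f = ln λ`. Koszul's formula for the metric `φ^*⟨·,·⟩ = e^{2f}⟨·,·⟩` expresses the second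
derivatives of `φ` in the frame `∂ₖφ` (`ConfData.hess`):
`∂ᵢ∂ⱼφ = ∂ᵢf ∂ⱼφ + ∂ⱼf ∂ᵢφ - δᵢⱼ Dφ(∇f)`, whence `Δφ = (2 - n) Dφ(∇f)`.

Commuting `∂ₖ` with `Δ` on `φ` yields a contracted integrability condition, which is the vanishing
of the Ricci tensor of `e^{2f}⟨·,·⟩`. For `n > 2` it forces (`ConfData.hess_f`)
`∂ᵢ∂ₖf = ∂ᵢf ∂ₖf - ½|∇f|² δᵢₖ`, so that `Δf = ½(2 - n)|∇f|²`, `∇|∇f|² = |∇f|²∇f` and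
`Δ∇f = ½(2 - n)|∇f|²∇f`.

With these identities the left side of the equation for `f` collapses to `(4 - n)|∇f|²∇f`, while
`Δ²φ = (2 - n)(4 - n)|∇f|² Dφ(∇f)` (`ConfData.lap_lap_p`). Since `Dφ` is injective and `n ≠ 2`, the
two vanish simultaneously.
-/

open scoped RealInnerProductSpace

noncomputable section

abbrev E (n : ℕ) := EuclideanSpace ℝ (Fin n)

/-- Partial derivative in the `i`-th coordinate direction. -/
def pd {m : ℕ} (u : E m → ℝ) (i : Fin m) : E m → ℝ :=
  fun x => fderiv ℝ u x (EuclideanSpace.single i 1)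

/-- Euclidean Laplacian `Δu = Σᵢ ∂²u/∂xᵢ²`. -/
def lap {m : ℕ} (u : E m → ℝ) : E m → ℝ :=
  fun x => ∑ i, pd (pd u i) i x

/-! ### Calculus of partial derivatives on an open set -/

section PartialDerivatives

variable {m : ℕ} {U : Set (E m)} {u v : E m → ℝ} {x : E m}

lemma smooth_differentiableAt (hU : IsOpen U) (hu : ContDiffOn ℝ (⊤ : ℕ∞) u U) (hx : x ∈ U) :
    DifferentiableAt ℝ u x :=
  (hu.contDiffAt (hU.mem_nhds hx)).differentiableAt (by simp)

lemma pd_congr (hU : IsOpen U) (h : ∀ y ∈ U, u y = v y) (hx : x ∈ U) (i : Fin m) :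
    pd u i x = pd v i x := by
  have : u =ᶠ[nhds x] v := Filter.eventuallyEq_of_mem (hU.mem_nhds hx) h
  simp only [pd, this.fderiv_eq]

lemma pd_smooth (hU : IsOpen U) (hu : ContDiffOn ℝ (⊤ : ℕ∞) u U) (i : Fin m) :
    ContDiffOn ℝ (⊤ : ℕ∞) (pd u i) U :=
  (hu.fderiv_of_isOpen hU (by simp)).clm_apply contDiffOn_const

lemma pd_add (hU : IsOpen U) (hu : ContDiffOn ℝ (⊤ : ℕ∞) u U) (hv : ContDiffOn ℝ (⊤ : ℕ∞) v U)
    (hx : x ∈ U) (i : Fin m) : pd (fun y => u y + v y) i x = pd u i x + pd v i x := by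
  simp only [pd]
  rw [fderiv_fun_add (smooth_differentiableAt hU hu hx) (smooth_differentiableAt hU hv hx)]
  rfl

lemma pd_sub (hU : IsOpen U) (hu : ContDiffOn ℝ (⊤ : ℕ∞) u U) (hv : ContDiffOn ℝ (⊤ : ℕ∞) v U)
    (hx : x ∈ U) (i : Fin m) : pd (fun y => u y - v y) i x = pd u i x - pd v i x := by
  simp only [pd]
  rw [fderiv_fun_sub (smooth_differentiableAt hU hu hx) (smooth_differentiableAt hU hv hx)]
  rfl

lemma pd_mul (hU : IsOpen U) (hu : ContDiffOn ℝ (⊤ : ℕ∞) u U) (hv : ContDiffOn ℝ (⊤ : ℕ∞) v U)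
    (hx : x ∈ U) (i : Fin m) :
    pd (fun y => u y * v y) i x = pd u i x * v x + u x * pd v i x := by
  simp only [pd]
  rw [fderiv_fun_mul (smooth_differentiableAt hU hu hx) (smooth_differentiableAt hU hv hx)]
  simp only [add_apply, smul_apply, smul_eq_mul]
  ring

lemma pd_const_mul (hU : IsOpen U) (hu : ContDiffOn ℝ (⊤ : ℕ∞) u U)
    (hx : x ∈ U) (c : ℝ) (i : Fin m) : pd (fun y => c * u y) i x = c * pd u i x := by
  simp only [pd]
  rw [fderiv_const_mul (smooth_differentiableAt hU hu hx)]
  rfl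

lemma pd_sum (hU : IsOpen U) {ι : Type*} [Fintype ι] {w : ι → E m → ℝ}
    (hw : ∀ a, ContDiffOn ℝ (⊤ : ℕ∞) (w a) U) (hx : x ∈ U) (i : Fin m) :
    pd (fun y => ∑ a, w a y) i x = ∑ a, pd (w a) i x := by
  simp only [pd]
  rw [fderiv_fun_sum (fun a _ => smooth_differentiableAt hU (hw a) hx)]
  simp

lemma pd_comm (hU : IsOpen U) (hu : ContDiffOn ℝ (⊤ : ℕ∞) u U) (hx : x ∈ U) (i j : Fin m) :
    pd (pd u i) j x = pd (pd u j) i x := by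
  have hc := hu.contDiffAt (hU.mem_nhds hx)
  have hs := hc.isSymmSndFDerivAt (by
    simpa using (show (2 : WithTop ℕ∞) ≤ ((⊤ : ℕ∞) : WithTop ℕ∞) from
      WithTop.coe_le_coe.mpr (le_top : (2 : ℕ∞) ≤ ⊤)))
  have hd : DifferentiableAt ℝ (fderiv ℝ u) x :=
    (hc.fderiv_right (m := 1) (by norm_cast)).differentiableAt (by simp)
  have key : ∀ a b : Fin m, pd (pd u a) b x
      = fderiv ℝ (fderiv ℝ u) x (EuclideanSpace.single b 1) (EuclideanSpace.single a 1) := by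
    intro a b
    change fderiv ℝ (fun y => fderiv ℝ u y (EuclideanSpace.single a 1)) x _ = _
    rw [fderiv_clm_apply hd (by fun_prop)]
    simp
  rw [key, key]
  exact hs _ _

lemma gradient_apply_eq_pd (u : E m → ℝ) (x : E m) (i : Fin m) :
    gradient u x i = pd u i x := by
  have h : ⟪gradient u x, EuclideanSpace.single i (1 : ℝ)⟫ = pd u i x := by
    simp only [gradient, InnerProductSpace.toDual_symm_apply, pd]
  rw [← h, EuclideanSpace.inner_single_right]
  simp

lemma norm_gradient_sq (u : E m → ℝ) (x : E m) :
    ‖gradient u x‖ ^ 2 = ∑ i, pd u i x * pd u i x := by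
  rw [EuclideanSpace.norm_sq_eq]
  refine Finset.sum_congr rfl fun i _ => ?_
  rw [gradient_apply_eq_pd, Real.norm_eq_abs, sq_abs, sq]

end PartialDerivatives

/-! ### Conformal frames -/

/-- A square matrix with orthogonal rows of equal nonzero length is injective. -/
lemma eq_zero_of_orthogonal_rows {n : ℕ} {A : Fin n → Fin n → ℝ} {c : ℝ} (hc : c ≠ 0)
    (hA : ∀ i j, ∑ a, A a i * A a j = c * if i = j then 1 else 0)
    {w : Fin n → ℝ} (hw : ∀ k, ∑ a, w a * A a k = 0) : w = 0 := by
  let M : Matrix (Fin n) (Fin n) ℝ := Matrix.of A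
  have h1 : (c⁻¹ • M.transpose) * M = 1 := by
    ext i j
    rw [Matrix.smul_mul, Matrix.smul_apply, Matrix.mul_apply]
    simp only [Matrix.transpose_apply, M, Matrix.of_apply, hA, smul_eq_mul, Matrix.one_apply]
    field_simp
  have h2 : M * (c⁻¹ • M.transpose) = 1 := mul_eq_one_comm.mp h1
  have h3 : Matrix.vecMul w M = 0 := by
    ext k
    simpa [Matrix.vecMul, dotProduct, M] using hw k
  calc w = Matrix.vecMul w (M * (c⁻¹ • M.transpose)) := by rw [h2, Matrix.vecMul_one]
    _ = 0 := by rw [← Matrix.vecMul_vecMul, h3, Matrix.zero_vecMul]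

/-- The columns of a matrix with `AᵀA = c` are linearly independent. -/
lemma coeff_eq_zero {n : ℕ} {A : Fin n → Fin n → ℝ} {c : ℝ} (hc : c ≠ 0)
    (hA : ∀ i j, ∑ a, A a i * A a j = c * if i = j then 1 else 0)
    {w : Fin n → ℝ} (hw : ∀ a, ∑ k, w k * A a k = 0) (j : Fin n) : w j = 0 := by
  have h : ∑ a, (∑ k, w k * A a k) * A a j = c * w j := by
    simp only [Finset.sum_mul]
    rw [Finset.sum_comm]
    simp only [mul_assoc, ← Finset.mul_sum, hA]
    simp [mul_comm]
  simp only [hw, zero_mul, Finset.sum_const_zero] at h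
  exact (mul_eq_zero.mp h.symm).resolve_left hc

/-- Components `p a` of a conformal map on `U` with factor `L`, where `f = ln L`
is encoded, up to a locally constant summand, by `∂ₖL = L ∂ₖf`. -/
structure ConfData {n : ℕ} (U : Set (E n)) (p : Fin n → E n → ℝ) (L f : E n → ℝ) : Prop where
  isOpen : IsOpen U
  smooth_p : ∀ a, ContDiffOn ℝ (⊤ : ℕ∞) (p a) U
  smooth_L : ContDiffOn ℝ (⊤ : ℕ∞) L U
  smooth_f : ContDiffOn ℝ (⊤ : ℕ∞) f U
  ne_zero : ∀ x ∈ U, L x ≠ 0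
  pd_L : ∀ x ∈ U, ∀ k, pd L k x = L x * pd f k x
  metric : ∀ x ∈ U, ∀ i j,
    ∑ a, pd (p a) i x * pd (p a) j x = L x ^ 2 * if i = j then 1 else 0

/-- The squared length `|∇f|²`. -/
def gradSq {n : ℕ} (f : E n → ℝ) : E n → ℝ := fun x => ∑ k, pd f k x * pd f k x

/-- The derivative of `u` in the direction `∇f`, that is `⟨∇f, ∇u⟩`. -/
def gradDot {n : ℕ} (f u : E n → ℝ) : E n → ℝ := fun x => ∑ k, pd f k x * pd u k x

namespace ConfData

variable {n : ℕ} {U : Set (E n)} {p : Fin n → E n → ℝ} {L f : E n → ℝ} {x : E n}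

lemma smooth_gradSq (h : ConfData U p L f) : ContDiffOn ℝ (⊤ : ℕ∞) (gradSq f) U :=
  ContDiffOn.sum fun k _ => (pd_smooth h.isOpen h.smooth_f k).mul (pd_smooth h.isOpen h.smooth_f k)

lemma smooth_gradDot (h : ConfData U p L f) (a : Fin n) :
    ContDiffOn ℝ (⊤ : ℕ∞) (gradDot f (p a)) U :=
  ContDiffOn.sum fun k _ =>
    (pd_smooth h.isOpen h.smooth_f k).mul (pd_smooth h.isOpen (h.smooth_p a) k)

/-- The derivative of the conformality relation. -/
lemma metric_deriv (h : ConfData U p L f) (hx : x ∈ U) (i j k : Fin n) :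
    (∑ a, pd (pd (p a) i) k x * pd (p a) j x) + ∑ a, pd (pd (p a) j) k x * pd (p a) i x
      = 2 * L x ^ 2 * pd f k x * if i = j then 1 else 0 := by
  have hs := fun a l => pd_smooth h.isOpen (h.smooth_p a) l
  have e1 : pd (fun y => ∑ a, pd (p a) i y * pd (p a) j y) k x
      = pd (fun y => (if i = j then 1 else 0) * (L y * L y)) k x :=
    pd_congr h.isOpen (fun y hy => by rw [h.metric y hy]; ring) hx k
  rw [pd_sum h.isOpen (fun a => (hs a i).mul (hs a j)) hx,
    pd_const_mul h.isOpen (h.smooth_L.mul h.smooth_L) hx,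
    pd_mul h.isOpen h.smooth_L h.smooth_L hx, h.pd_L x hx] at e1
  simp only [pd_mul h.isOpen (hs _ i) (hs _ j) hx, Finset.sum_add_distrib] at e1
  simp only [mul_comm (pd (p _) i x)] at e1
  rw [e1]
  ring

/-- Koszul's formula for the metric `L²⟨·,·⟩`. -/
lemma koszul (h : ConfData U p L f) (hx : x ∈ U) (i j k : Fin n) :
    ∑ a, pd (pd (p a) i) j x * pd (p a) k x
      = L x ^ 2 * (pd f i x * (if j = k then 1 else 0) + pd f j x * (if i = k then 1 else 0)
        - pd f k x * if i = j then 1 else 0) := by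
  have h1 := h.metric_deriv hx i k j
  have h2 := h.metric_deriv hx j k i
  have h3 := h.metric_deriv hx i j k
  have c := fun a => pd_comm h.isOpen (h.smooth_p a) hx
  simp only [c _ k j, c _ j i] at h1 h2 h3 ⊢
  simp only [c _ k i] at h1 h2 h3 ⊢
  linarith

/-- The second derivatives of a conformal map, expressed in the frame `∂ₖφ`
(the Christoffel symbols of `L²⟨·,·⟩`). -/
lemma hess (h : ConfData U p L f) (hx : x ∈ U) (a i j : Fin n) :
    pd (pd (p a) i) j x = pd f i x * pd (p a) j x + pd f j x * pd (p a) i x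
      - (if i = j then 1 else 0) * gradDot f (p a) x := by
  have key := eq_zero_of_orthogonal_rows (A := fun a i => pd (p a) i x)
    (pow_ne_zero 2 (h.ne_zero x hx)) (h.metric x hx)
    (w := fun a => pd (pd (p a) i) j x - (pd f i x * pd (p a) j x + pd f j x * pd (p a) i x
      - (if i = j then 1 else 0) * gradDot f (p a) x)) ?_
  · exact sub_eq_zero.mp (congrFun key a)
  · intro k
    have hV : ∑ b, gradDot f (p b) x * pd (p b) k x = L x ^ 2 * pd f k x := by
      simp only [gradDot, Finset.sum_mul]
      rw [Finset.sum_comm]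
      simp only [mul_assoc, ← Finset.mul_sum, h.metric x hx]
      simp [mul_comm]
    simp only [sub_mul, add_mul, Finset.sum_sub_distrib, Finset.sum_add_distrib, mul_assoc,
      ← Finset.mul_sum, h.metric x hx, h.koszul hx, hV]
    ring

/-- The tension field of a conformal map: `Δφ = (2 - n) Dφ(∇f)`. -/
lemma lap_p (h : ConfData U p L f) (hx : x ∈ U) (a : Fin n) :
    lap (p a) x = (2 - (n : ℝ)) * gradDot f (p a) x := by
  simp only [lap, h.hess hx, if_true, Finset.sum_sub_distrib, Finset.sum_add_distrib]
  simp only [Finset.sum_const, Finset.card_univ, Fintype.card_fin, nsmul_eq_mul]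
  simp only [gradDot]
  ring

/-- Contracting the second derivatives with `∇f` once. -/
lemma sum_pd_f_mul_hess (h : ConfData U p L f) (hx : x ∈ U) (a k : Fin n) :
    ∑ l, pd f l x * pd (pd (p a) l) k x = gradSq f x * pd (p a) k x := by
  have e : ∀ l, pd f l x * pd (pd (p a) l) k x
      = (pd f l x * pd f l x) * pd (p a) k x + pd f k x * (pd f l x * pd (p a) l x)
        - (if l = k then pd f l x * gradDot f (p a) x else 0) := by
    intro l
    rw [h.hess hx]
    split_ifs <;> ring
  simp only [e, Finset.sum_sub_distrib, Finset.sum_add_distrib, ← Finset.mul_sum,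
    ← Finset.sum_mul, Finset.sum_ite_eq', Finset.mem_univ, if_true]
  simp only [gradSq, gradDot]
  ring

lemma pd_gradDot (h : ConfData U p L f) (hx : x ∈ U) (a k : Fin n) :
    pd (gradDot f (p a)) k x
      = (∑ l, pd (pd f l) k x * pd (p a) l x) + gradSq f x * pd (p a) k x := by
  have hf := pd_smooth h.isOpen h.smooth_f
  have hp := pd_smooth h.isOpen (h.smooth_p a)
  rw [← h.sum_pd_f_mul_hess hx, ← Finset.sum_add_distrib]
  simp only [← pd_mul h.isOpen (hf _) (hp _) hx]
  exact pd_sum h.isOpen (fun l => (hf l).mul (hp l)) hx k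

/-- The contracted integrability condition `∂ₖ(Δφ) = Σᵢ ∂ᵢ(∂ᵢ∂ₖφ)`, written out with the formula
for the second derivatives of `φ`. It says that the pulled-back metric has vanishing Ricci
curvature. -/
lemma integrability (h : ConfData U p L f) (hx : x ∈ U) (a k : Fin n) :
    (2 - (n : ℝ)) * ((∑ l, pd (pd f l) k x * pd (p a) l x) + gradSq f x * pd (p a) k x
      - pd f k x * gradDot f (p a) x) = lap f x * pd (p a) k x := by
  have hf := pd_smooth h.isOpen h.smooth_f
  have hp := pd_smooth h.isOpen (h.smooth_p a)
  have hV := h.smooth_gradDot a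
  have e1 : pd (lap (p a)) k x = (2 - (n : ℝ)) * pd (gradDot f (p a)) k x := by
    rw [pd_congr h.isOpen (fun y hy => h.lap_p hy a) hx, pd_const_mul h.isOpen hV hx]
  have e2 : pd (lap (p a)) k x = ∑ i, pd (pd (pd (p a) k) i) i x := by
    have : pd (lap (p a)) k x = ∑ i, pd (pd (pd (p a) i) i) k x :=
      pd_sum h.isOpen (fun i => pd_smooth h.isOpen (hp i) i) hx k
    rw [this]
    refine Finset.sum_congr rfl fun i _ => ?_
    rw [pd_comm h.isOpen (hp i) hx]
    exact pd_congr h.isOpen (fun y hy => pd_comm h.isOpen (h.smooth_p a) hy i k) hx i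
  have e3 : ∀ i, pd (pd (pd (p a) k) i) i x
      = pd (pd f k) i x * pd (p a) i x + pd f k x * pd (pd (p a) i) i x
        + (pd (pd f i) i x * pd (p a) k x + pd f i x * pd (pd (p a) i) k x)
        - (if k = i then pd (gradDot f (p a)) i x else 0) := by
    intro i
    rw [pd_congr h.isOpen (fun y hy => h.hess hy a k i) hx,
      pd_sub h.isOpen (((hf k).mul (hp i)).add ((hf i).mul (hp k))) (contDiffOn_const.mul hV) hx,
      pd_add h.isOpen ((hf k).mul (hp i)) ((hf i).mul (hp k)) hx,
      pd_mul h.isOpen (hf k) (hp i) hx, pd_mul h.isOpen (hf i) (hp k) hx,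
      pd_const_mul h.isOpen hV hx, pd_comm h.isOpen (h.smooth_p a) hx k i]
    split_ifs <;> ring
  have e4 : ∑ i, pd (pd (p a) i) i x = (2 - (n : ℝ)) * gradDot f (p a) x := h.lap_p hx a
  have e5 : ∑ i, pd (pd f k) i x * pd (p a) i x = ∑ i, pd (pd f i) k x * pd (p a) i x :=
    Finset.sum_congr rfl fun i _ => by rw [pd_comm h.isOpen h.smooth_f hx]
  have e6 : ∑ i, pd (pd f i) i x = lap f x := rfl
  simp only [e2, e3, Finset.sum_sub_distrib, Finset.sum_add_distrib, ← Finset.mul_sum,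
    ← Finset.sum_mul, Finset.sum_ite_eq, Finset.mem_univ, if_true, e4, e5, e6,
    h.sum_pd_f_mul_hess hx, h.pd_gradDot hx] at e1
  linarith

/-- Flatness of the pulled-back metric `e^{2f}⟨·,·⟩` in dimension at least three: its Schouten
tensor vanishes. -/
lemma hess_f (h : ConfData U p L f) (hn : 2 < n) (hx : x ∈ U) (i k : Fin n) :
    pd (pd f i) k x = pd f i x * pd f k x - (if i = k then 1 else 0) * (gradSq f x / 2) := by
  have hn' : (2 : ℝ) < n := by exact_mod_cast hn
  have key : ∀ l k, (2 - (n : ℝ)) * (pd (pd f l) k x + (if l = k then 1 else 0) * gradSq f x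
      - pd f k x * pd f l x) - (if l = k then 1 else 0) * lap f x = 0 := by
    intro l k
    refine coeff_eq_zero (A := fun a i => pd (p a) i x)
      (pow_ne_zero 2 (h.ne_zero x hx)) (h.metric x hx) (w := fun l =>
        (2 - (n : ℝ)) * (pd (pd f l) k x + (if l = k then 1 else 0) * gradSq f x
          - pd f k x * pd f l x) - (if l = k then 1 else 0) * lap f x) (fun a => ?_) l
    have := h.integrability hx a k
    simp only [sub_mul, add_mul, mul_assoc, Finset.sum_sub_distrib, Finset.sum_add_distrib,
      ← Finset.mul_sum, ite_mul, one_mul, zero_mul, Finset.sum_ite_eq', Finset.mem_univ, if_true]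
    simp only [gradDot] at this
    linarith
  -- The trace of `key` determines `Δf`.
  have tr : (2 - (n : ℝ)) * (lap f x + n * gradSq f x - gradSq f x) - n * lap f x = 0 := by
    have := Finset.sum_eq_zero (s := Finset.univ) fun l _ => key l l
    simpa [Finset.sum_sub_distrib, Finset.sum_add_distrib, ← Finset.mul_sum, lap, gradSq]
      using this
  have hl : lap f x = (2 - (n : ℝ)) / 2 * gradSq f x := by
    have : ((n : ℝ) - 1) * (lap f x - (2 - (n : ℝ)) / 2 * gradSq f x) = 0 := by linarith
    have := (mul_eq_zero.mp this).resolve_left (by linarith)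
    linarith
  have := key i k
  rw [hl] at this
  have h2 : (2 - (n : ℝ)) * (pd (pd f i) k x - (pd f i x * pd f k x
      - (if i = k then 1 else 0) * (gradSq f x / 2))) = 0 := by linarith
  exact sub_eq_zero.mp ((mul_eq_zero.mp h2).resolve_left (by linarith))

lemma lap_f (h : ConfData U p L f) (hn : 2 < n) (hx : x ∈ U) :
    lap f x = (2 - (n : ℝ)) / 2 * gradSq f x := by
  simp only [lap, h.hess_f hn hx, if_true, Finset.sum_sub_distrib]
  simp only [Finset.sum_const, Finset.card_univ, Fintype.card_fin, nsmul_eq_mul]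
  simp only [gradSq]
  ring

/-- Contraction of `∇df = df ⊗ df - ½|∇f|²⟨·,·⟩` with a vector. -/
lemma sum_hess_f_mul (h : ConfData U p L f) (hn : 2 < n) (hx : x ∈ U) (k : Fin n)
    (w : Fin n → ℝ) : ∑ l, pd (pd f l) k x * w l
      = pd f k x * (∑ l, pd f l x * w l) - gradSq f x / 2 * w k := by
  simp only [h.hess_f hn hx, sub_mul, Finset.sum_sub_distrib, ite_mul, one_mul, zero_mul,
    Finset.sum_ite_eq', Finset.mem_univ, if_true, Finset.mul_sum]
  congr 1
  exact Finset.sum_congr rfl fun l _ => by ring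

lemma pd_gradSq (h : ConfData U p L f) (hn : 2 < n) (hx : x ∈ U) (k : Fin n) :
    pd (gradSq f) k x = gradSq f x * pd f k x := by
  have hf := pd_smooth h.isOpen h.smooth_f
  have e : pd (gradSq f) k x = ∑ l, pd (fun y => pd f l y * pd f l y) k x :=
    pd_sum h.isOpen (fun l => (hf l).mul (hf l)) hx k
  have e2 := h.sum_hess_f_mul hn hx k (fun l => pd f l x)
  have e3 : ∑ l, pd f l x * pd f l x = gradSq f x := rfl
  simp only [pd_mul h.isOpen (hf _) (hf _) hx, Finset.sum_add_distrib] at e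
  simp only [mul_comm (pd f _ x) (pd (pd f _) k x)] at e
  rw [e, e2, e3]
  ring

/-- The derivative of `⟨∇f, ∇φ⟩` once the Hessian of `f` is known. -/
lemma pd_gradDot' (h : ConfData U p L f) (hn : 2 < n) (hx : x ∈ U) (a k : Fin n) :
    pd (gradDot f (p a)) k x
      = pd f k x * gradDot f (p a) x + 1 / 2 * (gradSq f x * pd (p a) k x) := by
  rw [h.pd_gradDot hx, h.sum_hess_f_mul hn hx]
  simp only [gradDot]
  ring

lemma lap_gradDot (h : ConfData U p L f) (hn : 2 < n) (hx : x ∈ U) (a : Fin n) :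
    lap (gradDot f (p a)) x = (4 - (n : ℝ)) * (gradSq f x * gradDot f (p a) x) := by
  have hf := pd_smooth h.isOpen h.smooth_f
  have hp := pd_smooth h.isOpen (h.smooth_p a)
  have hV := h.smooth_gradDot a
  have hQ := h.smooth_gradSq
  have e : ∀ k, pd (pd (gradDot f (p a)) k) k x
      = pd (pd f k) k x * gradDot f (p a) x + gradDot f (p a) x * (pd f k x * pd f k x)
        + gradSq f x * (pd f k x * pd (p a) k x) + gradSq f x / 2 * pd (pd (p a) k) k x := by
    intro k
    rw [pd_congr h.isOpen (fun y hy => h.pd_gradDot' hn hy a k) hx,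
      pd_add h.isOpen ((hf k).mul hV) (contDiffOn_const.mul (hQ.mul (hp k))) hx,
      pd_mul h.isOpen (hf k) hV hx, pd_const_mul h.isOpen (hQ.mul (hp k)) hx,
      pd_mul h.isOpen hQ (hp k) hx, h.pd_gradSq hn hx, h.pd_gradDot' hn hx]
    ring
  have e1 : ∑ k, pd (pd f k) k x = _ := h.lap_f hn hx
  have e2 : ∑ k, pd (pd (p a) k) k x = _ := h.lap_p hx a
  have e3 : ∑ l, pd f l x * pd f l x = gradSq f x := rfl
  have e4 : ∑ l, pd f l x * pd (p a) l x = gradDot f (p a) x := rfl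
  simp only [lap, e, Finset.sum_add_distrib, ← Finset.mul_sum, ← Finset.sum_mul, e1, e2, e3, e4]
  ring

/-- The bitension field of a conformal map: `Δ²φ = (2 - n)(4 - n)|∇f|² Dφ(∇f)`. -/
lemma lap_lap_p (h : ConfData U p L f) (hn : 2 < n) (hx : x ∈ U) (a : Fin n) :
    lap (lap (p a)) x
      = (2 - (n : ℝ)) * ((4 - (n : ℝ)) * (gradSq f x * gradDot f (p a) x)) := by
  have hV := h.smooth_gradDot a
  rw [← h.lap_gradDot hn hx]
  simp only [lap, Finset.mul_sum]
  refine Finset.sum_congr rfl fun i _ => ?_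
  rw [← pd_const_mul h.isOpen (pd_smooth h.isOpen hV i) hx]
  refine pd_congr h.isOpen (fun y hy => ?_) hx i
  rw [← pd_const_mul h.isOpen hV hy]
  exact pd_congr h.isOpen (fun z hz => h.lap_p hz a) hy i

lemma lap_pd_f (h : ConfData U p L f) (hn : 2 < n) (hx : x ∈ U) (i : Fin n) :
    lap (pd f i) x = (2 - (n : ℝ)) / 2 * (gradSq f x * pd f i x) := by
  have hf := pd_smooth h.isOpen h.smooth_f
  have e1 : lap (pd f i) x = pd (lap f) i x := by
    have : pd (lap f) i x = ∑ k, pd (pd (pd f k) k) i x :=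
      pd_sum h.isOpen (fun k => pd_smooth h.isOpen (hf k) k) hx i
    rw [this]
    refine Finset.sum_congr rfl fun k _ => ?_
    rw [pd_comm h.isOpen (hf k) hx k i]
    exact pd_congr h.isOpen (fun y hy => pd_comm h.isOpen h.smooth_f hy i k) hx k
  rw [e1, pd_congr h.isOpen (fun y hy => h.lap_f hn hy) hx,
    pd_const_mul h.isOpen h.smooth_gradSq hx, h.pd_gradSq hn hx]

end ConfData

lemma confData_of_conformal {n : ℕ} {U : Set (E n)} (hU : IsOpen U)
    {φ : E n → E n} (hφ : ContDiffOn ℝ (⊤ : ℕ∞) φ U)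
    {lam : E n → ℝ} (hlam : ContDiffOn ℝ (⊤ : ℕ∞) lam U) (hpos : ∀ x ∈ U, 0 < lam x)
    (hconf : ∀ x ∈ U, ∀ u v : E n,
      ⟪fderiv ℝ φ x u, fderiv ℝ φ x v⟫ = (lam x) ^ 2 * ⟪u, v⟫) :
    ConfData U (fun a y => φ y a) lam (fun z => Real.log (lam z)) where
  isOpen := hU
  smooth_p a := contDiffOn_euclidean.mp hφ a
  smooth_L := hlam
  smooth_f := hlam.log fun x hx => (hpos x hx).ne'
  ne_zero x hx := (hpos x hx).ne'
  pd_L x hx k := by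
    have hd := smooth_differentiableAt hU hlam hx
    have hne := (hpos x hx).ne'
    simp only [pd, fderiv.log hd hne, smul_apply, smul_eq_mul]
    field_simp
  metric x hx i j := by
    have hd : DifferentiableAt ℝ φ x :=
      (hφ.contDiffAt (hU.mem_nhds hx)).differentiableAt (by simp)
    have hpd : ∀ a k, pd (fun y => φ y a) k x
        = fderiv ℝ φ x (EuclideanSpace.single k 1) a := by
      intro a k
      have := ((EuclideanSpace.proj (𝕜 := ℝ) a).hasFDerivAt.comp x hd.hasFDerivAt).fderiv
      exact congrArg (fun T : E n →L[ℝ] ℝ => T (EuclideanSpace.single k 1)) this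
    have := hconf x hx (EuclideanSpace.single i 1) (EuclideanSpace.single j 1)
    rw [PiLp.inner_apply, EuclideanSpace.inner_single_left] at this
    simp only [hpd]
    simpa [mul_comm, Pi.single_apply] using this

/-- A conformal map `φ` between equidimensional flat spaces (`n > 2`) of conformal factor
`λ` is biharmonic iff
`Δ(∇lnλ) − (Δlnλ)∇lnλ + 2∇(|∇lnλ|²) + (2−n)|∇lnλ|²∇lnλ = 0` (Corollary 4.3 (i), flat
case). -/
theorem conformal_biharmonic_iff {n : ℕ} (hn : 2 < n) (U : Set (E n)) (hU : IsOpen U)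
    (φ : E n → E n) (hφ : ContDiffOn ℝ (⊤ : ℕ∞) φ U)
    (lam : E n → ℝ) (hlam : ContDiffOn ℝ (⊤ : ℕ∞) lam U) (hpos : ∀ x ∈ U, 0 < lam x)
    (hconf : ∀ x ∈ U, ∀ u v : E n,
      ⟪fderiv ℝ φ x u, fderiv ℝ φ x v⟫ = (lam x) ^ 2 * ⟪u, v⟫) :
    (∀ α : Fin n, ∀ x ∈ U, lap (lap (fun y => φ y α)) x = 0) ↔
      (∀ x ∈ U, ∀ i : Fin n,
        lap (fun y => gradient (fun z => Real.log (lam z)) y i) x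
          - lap (fun z => Real.log (lam z)) x
              * gradient (fun z => Real.log (lam z)) x i
          + 2 * gradient (fun y => ‖gradient (fun z => Real.log (lam z)) y‖ ^ 2) x i
          + (2 - (n : ℝ)) * ‖gradient (fun z => Real.log (lam z)) x‖ ^ 2
              * gradient (fun z => Real.log (lam z)) x i
          = 0) := by
  have h := confData_of_conformal hU hφ hlam hpos hconf
  have hn' : (2 : ℝ) < n := by exact_mod_cast hn
  simp only [gradient_apply_eq_pd, norm_gradient_sq]
  set f : E n → ℝ := fun z => Real.log (lam z) with hf
  -- Both sides of the equivalence reduce to `(4 - n)|∇f|² ∇f = 0`.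
  have hR : ∀ x ∈ U, ∀ i,
      lap (pd f i) x - lap f x * pd f i x + 2 * pd (gradSq f) i x
        + (2 - (n : ℝ)) * gradSq f x * pd f i x = (4 - (n : ℝ)) * (gradSq f x * pd f i x) := by
    intro x hx i
    rw [h.lap_pd_f hn hx, h.lap_f hn hx, h.pd_gradSq hn hx]
    ring
  change _ ↔ ∀ x ∈ U, ∀ i, lap (pd f i) x - lap f x * pd f i x + 2 * pd (gradSq f) i x
        + (2 - (n : ℝ)) * gradSq f x * pd f i x = 0
  constructor
  · intro hb x hx i
    rw [hR x hx i]
    refine coeff_eq_zero (A := fun a i => pd (fun y => φ y a) i x)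
      (pow_ne_zero 2 (h.ne_zero x hx)) (h.metric x hx)
      (w := fun i => (4 - (n : ℝ)) * (gradSq f x * pd f i x)) (fun a => ?_) i
    have := hb a x hx
    rw [h.lap_lap_p hn hx] at this
    have := (mul_eq_zero.mp this).resolve_left (by linarith)
    simpa only [gradDot, mul_assoc, ← Finset.mul_sum] using this
  · intro hr a x hx
    rw [h.lap_lap_p hn hx]
    have : (4 - (n : ℝ)) * (gradSq f x * gradDot f (fun y => φ y a) x)
        = ∑ i, (4 - (n : ℝ)) * (gradSq f x * pd f i x) * pd (fun y => φ y a) i x := by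
      simp only [gradDot, mul_assoc, ← Finset.mul_sum]
    rw [this, Finset.sum_eq_zero, mul_zero]
    intro i _
    rw [← hR x hx i, hr x hx i, zero_mul]

end
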